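/- Let Λ ⊂ ℝ^d be a full-rank lattice with covering radius h(Λ) < 1/2, and let P = Λ ∩ [0,1)^d. Then the covering radius of P with respect to [0,1]^d satisfies h(P) ≤ (1+√d) · h(Λ). -/

import Mathlib

open scoped RealInnerProductSpace

noncomputable section

/-- `ℝ^d` with the Euclidean norm. -/
abbrev Euc (d : ℕ) := EuclideanSpace ℝ (Fin d)

/-- `Λ` is the full-rank lattice generated by the columns of the invertible matrix `T`. -/
def IsLatticeOf {d : ℕ} (Λ : Set (Euc d)) (T : Matrix (Fin d) (Fin d) ℝ) : Prop :=
  IsUnit T.det ∧ Λ = { v : Euc d | ∃ k : Fin d → ℤ, ∀ i, v i = ∑ j, T i j * (k j : ℝ) }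

/-- Covering radius of `Λ` with respect to all of `ℝ^d`:
`h(Λ) = sup_{x ∈ ℝ^d} inf_{y ∈ Λ} ‖x - y‖₂`. -/
def covRad {d : ℕ} (Λ : Set (Euc d)) : ℝ :=
  ⨆ x : Euc d, sInf (Set.image (dist x) Λ)

/-- Separation radius of a lattice: half the length of the shortest nonzero vector. -/
def sepRad {d : ℕ} (Λ : Set (Euc d)) : ℝ :=
  (1 / 2) * sInf (Set.image norm (Λ \ {0}))

/-- Mesh ratio `ρ(Λ) = h(Λ)/q(Λ)` of a lattice. -/
def meshRatio {d : ℕ} (Λ : Set (Euc d)) : ℝ := covRad Λ / sepRad Λ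

/-- The `j`-th successive minimum of `Λ` with respect to the Euclidean unit ball:
`λ_j(Λ) = inf { r > 0 : dim span(Λ ∩ rB_d) ≥ j }`. -/
def succMin {d : ℕ} (Λ : Set (Euc d)) (j : ℕ) : ℝ :=
  sInf { r : ℝ | 0 < r ∧
    j ≤ Module.finrank ℝ (Submodule.span ℝ (Λ ∩ Metric.closedBall (0 : Euc d) r)) }

/-- The dual lattice `Λ⊥ = { y : x·y ∈ ℤ for all x ∈ Λ }`. -/
def dualLat {d : ℕ} (Λ : Set (Euc d)) : Set (Euc d) :=
  { y | ∀ x ∈ Λ, ∃ n : ℤ, ⟪x, y⟫ = (n : ℝ) }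

/-- The closed unit cube `[0,1]^d`. -/
def unitCube (d : ℕ) : Set (Euc d) := { x | ∀ i, 0 ≤ x i ∧ x i ≤ 1 }

/-- The half-open unit cube `[0,1)^d`. -/
def halfOpenCube (d : ℕ) : Set (Euc d) := { x | ∀ i, 0 ≤ x i ∧ x i < 1 }

/-- Covering radius of a point set `P` with respect to the unit cube `[0,1]^d`. -/
def covRadCube {d : ℕ} (P : Set (Euc d)) : ℝ :=
  ⨆ x : unitCube d, sInf (Set.image (dist (x : Euc d)) P)

/-- Separation radius of a point set:
`q(P) = (1/2) min_{x ≠ y ∈ P} ‖x - y‖₂`. -/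
def sepRadSet {d : ℕ} (P : Set (Euc d)) : ℝ :=
  (1 / 2) * sInf { r : ℝ | ∃ x ∈ P, ∃ y ∈ P, x ≠ y ∧ r = dist x y }

/-- Mesh ratio `ρ(P) = h(P)/q(P)` of a point set with respect to `[0,1]^d`. -/
def meshRatioSet {d : ℕ} (P : Set (Euc d)) : ℝ := covRadCube P / sepRadSet P

/-- The constant `C_d = 2^d Γ(1+d/2) / π^{d/2}`. -/
def Cd (d : ℕ) : ℝ := 2 ^ d * Real.Gamma (1 + (d : ℝ) / 2) / Real.pi ^ ((d : ℝ) / 2)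

/-!
Shrinking the cube towards its centre `c` by the factor `1 - 2r` moves a point by at most
`2r · √d / 2 = r√d`, and leaves an open ball of radius `r` around the moved point inside the
interior of the cube, because the cube is convex and contains the ball of radius `1 / 2` around
`c`. For `h(Λ) < r < 1 / 2` that ball contains a point of `Λ`, which lies within `r√d + r` of the
original point; now let `r` tend to `h(Λ)`.
-/

section ConvexBody

open Metric

variable {E : Type*} [SeminormedAddCommGroup E] [NormedSpace ℝ E] {K L Λ : Set E} {c x : E}
  {h r t R ρ : ℝ}

lemma ball_lineMap_subset_interior (hK : Convex ℝ K) (hball : ball c ρ ⊆ K) (hx : x ∈ K)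
    (ht₀ : 0 < t) (ht₁ : t ≤ 1) :
    ball (AffineMap.lineMap x c t) (t * ρ) ⊆ interior K := by
  intro y hy
  obtain ⟨z, rfl⟩ : ∃ z, AffineMap.lineMap x z t = y :=
    ⟨AffineMap.lineMap x y t⁻¹, by simp [AffineMap.lineMap_apply, ht₀.ne']⟩
  have hzc : z ∈ ball c ρ := by
    have hdist : dist (AffineMap.lineMap x z t) (AffineMap.lineMap x c t) = t * dist z c := by
      simp [AffineMap.lineMap_apply, dist_smul₀, abs_of_pos ht₀]
    rw [mem_ball, hdist] at hy
    exact lt_of_mul_lt_mul_left hy ht₀.le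
  have hz : z ∈ interior K := interior_maximal hball isOpen_ball hzc
  rw [AffineMap.lineMap_apply_module]
  exact hK.combo_self_interior_mem_interior hx hz (sub_nonneg.2 ht₁) ht₀ (sub_add_cancel 1 t)

lemma exists_mem_inter_interior_dist_le (hK : Convex ℝ K) (hball : ball c ρ ⊆ K)
    (hKR : K ⊆ closedBall c R) (hΛ : ∀ z, ∃ y ∈ Λ, dist z y < r) (hrρ : r ≤ ρ) (hx : x ∈ K) :
    ∃ y ∈ Λ ∩ interior K, dist x y ≤ (1 + R / ρ) * r := by
  obtain ⟨y, hyΛ, hy⟩ := hΛ (AffineMap.lineMap x c (r / ρ))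
  have hr : 0 < r := dist_nonneg.trans_lt hy
  have hρ : 0 < ρ := hr.trans_le hrρ
  have hyK : y ∈ interior K := by
    refine ball_lineMap_subset_interior hK hball hx (div_pos hr hρ) ((div_le_one hρ).2 hrρ) ?_
    rwa [div_mul_cancel₀ r hρ.ne', mem_ball']
  refine ⟨y, ⟨hyΛ, hyK⟩, ?_⟩
  calc dist x y
      ≤ dist x (AffineMap.lineMap x c (r / ρ)) + dist (AffineMap.lineMap x c (r / ρ)) y :=
        dist_triangle ..
    _ ≤ r / ρ * R + r := by
        rw [dist_left_lineMap, Real.norm_of_nonneg (div_pos hr hρ).le]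
        gcongr
        exact hKR hx
    _ = (1 + R / ρ) * r := by ring

lemma infDist_inter_le_of_convex (hK : Convex ℝ K) (hball : ball c ρ ⊆ K) (hKR : K ⊆ closedBall c R)
    (hKL : interior K ⊆ L) (hne : Λ.Nonempty) (hΛ : ∀ z, infDist z Λ ≤ h) (hρ : h < ρ)
    (hx : x ∈ K) :
    infDist x (Λ ∩ L) ≤ (1 + R / ρ) * h := by
  have hlim : Filter.Tendsto (fun r ↦ (1 + R / ρ) * r) (nhdsWithin h (Set.Ioi h))
      (nhds ((1 + R / ρ) * h)) :=
    ((continuous_const_mul _).tendsto h).mono_left nhdsWithin_le_nhds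
  refine ge_of_tendsto hlim ?_
  filter_upwards [Ioo_mem_nhdsGT hρ] with r ⟨hhr, hrρ⟩
  have hdense (z : E) : ∃ y ∈ Λ, dist z y < r := (infDist_lt_iff hne).1 ((hΛ z).trans_lt hhr)
  obtain ⟨y, ⟨hyΛ, hyK⟩, hxy⟩ :=
    exists_mem_inter_interior_dist_le hK hball hKR hdense hrρ.le hx
  have hyL : y ∈ Λ ∩ L := ⟨hyΛ, hKL hyK⟩
  exact (infDist_le_dist_of_mem hyL).trans hxy

end ConvexBody

section UnitCube

open Metric

lemma dist_le_sqrt_card_mul {ι : Type*} [Fintype ι] {x y : EuclideanSpace ℝ ι} {r : ℝ}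
    (hr : 0 ≤ r) (hxy : ∀ i, dist (x i) (y i) ≤ r) : dist x y ≤ √(Fintype.card ι) * r :=
  calc dist x y
      = √(∑ i, dist (x i) (y i) ^ 2) := EuclideanSpace.dist_eq x y
    _ ≤ √(∑ _i : ι, r ^ 2) := by gcongr; exact hxy _
    _ = √(Fintype.card ι) * r := by simp [Real.sqrt_sq hr]

variable {d : ℕ}

/-- The centre `(1/2, …, 1/2)` of the unit cube, towards which the cube is shrunk. -/
def cubeCenter (d : ℕ) : Euc d := WithLp.toLp 2 fun _ ↦ 1 / 2

lemma mem_unitCube_iff_dist_cubeCenter_le {x : Euc d} :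
    x ∈ unitCube d ↔ ∀ i, dist (x i) (cubeCenter d i) ≤ 1 / 2 := by
  refine forall_congr' fun i ↦ ?_
  rw [Real.dist_eq, abs_le, cubeCenter]
  constructor <;> rintro ⟨h₀, h₁⟩ <;> constructor <;> linarith

lemma convex_unitCube : Convex ℝ (unitCube d) := by
  simp only [unitCube, Set.ofPred_forall]
  exact convex_iInter fun i ↦ (convex_Icc (0 : ℝ) 1).linear_preimage
    (EuclideanSpace.proj i : Euc d →L[ℝ] ℝ).toLinearMap

lemma ball_cubeCenter_subset_unitCube : ball (cubeCenter d) (1 / 2) ⊆ unitCube d := fun x hx ↦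
  mem_unitCube_iff_dist_cubeCenter_le.2 fun i ↦ (PiLp.dist_apply_le x _ i).trans hx.le

lemma unitCube_subset_closedBall_cubeCenter :
    unitCube d ⊆ closedBall (cubeCenter d) (√d * (1 / 2)) := fun x hx ↦ by
  simpa using dist_le_sqrt_card_mul (by norm_num) (mem_unitCube_iff_dist_cubeCenter_le.1 hx)

lemma interior_unitCube_subset_halfOpenCube : interior (unitCube d) ⊆ halfOpenCube d := by
  intro x hx i
  have hopen : IsOpenMap (EuclideanSpace.proj i : Euc d →L[ℝ] ℝ) :=
    ContinuousLinearMap.isOpenMap _ fun a ↦ ⟨EuclideanSpace.single i a, by simp⟩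
  have hmaps : Set.MapsTo (EuclideanSpace.proj i : Euc d →L[ℝ] ℝ) (unitCube d) (Set.Icc 0 1) :=
    fun y hy ↦ hy i
  have hxi : x i ∈ Set.Ioo (0 : ℝ) 1 := interior_Icc (α := ℝ) ▸ hopen.mapsTo_interior hmaps hx
  exact ⟨hxi.1.le, hxi.2⟩

end UnitCube

section CoveringRadius

open Metric

lemma sInf_image_dist_eq_infDist {X : Type*} [PseudoMetricSpace X] (x : X) (s : Set X) :
    sInf (dist x '' s) = infDist x s := by
  rw [infDist_eq_iInf, sInf_image']

variable {d : ℕ} {Λ : Set (Euc d)}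

lemma infDist_le_covRad (hΛ : BddAbove (Set.range fun x ↦ infDist x Λ)) (x : Euc d) :
    infDist x Λ ≤ covRad Λ := by
  simpa only [covRad, sInf_image_dist_eq_infDist] using le_ciSup hΛ x

lemma covRadCube_le {r : ℝ} (hr : ∀ x ∈ unitCube d, infDist x Λ ≤ r) : covRadCube Λ ≤ r := by
  have : Nonempty (unitCube d) := ⟨0, fun i ↦ by simp⟩
  exact ciSup_le fun x ↦ (sInf_image_dist_eq_infDist _ _).trans_le (hr x x.2)

end CoveringRadius

section Lattice

open Metric Module

variable {d : ℕ} {Λ : Set (Euc d)} {T : Matrix (Fin d) (Fin d) ℝ}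

lemma infDist_span_int_le {ι E : Type*} [Fintype ι] [NormedAddCommGroup E] [NormedSpace ℝ E]
    (b : Basis ι ℝ E) (x : E) :
    infDist x (Submodule.span ℤ (Set.range b)) ≤ ∑ i, ‖b i‖ :=
  calc infDist x (Submodule.span ℤ (Set.range b))
      ≤ dist x (ZSpan.floor b x) := infDist_le_dist_of_mem (ZSpan.floor b x).2
    _ = ‖ZSpan.fract b x‖ := by rw [dist_eq_norm, ZSpan.fract_apply]
    _ ≤ ∑ i, ‖b i‖ := ZSpan.norm_fract_le b x

namespace IsLatticeOf

lemma exists_basis (hT : IsLatticeOf Λ T) :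
    ∃ b : Basis (Fin d) ℝ (Euc d), Λ = Submodule.span ℤ (Set.range b) := by
  let b : Basis (Fin d) ℝ (Euc d) := (Pi.basisFun ℝ (Fin d)).map
    (T.toLinearEquiv (Pi.basisFun ℝ (Fin d)) hT.1 ≪≫ₗ (WithLp.linearEquiv 2 ℝ _).symm)
  have hcol (i j : Fin d) : b j i = T i j := by simp [b, Matrix.toLin_eq_toLin']
  refine ⟨b, ?_⟩
  rw [hT.2]
  ext v
  simp only [Set.mem_ofPred_eq, SetLike.mem_coe, Submodule.mem_span_range_iff_exists_fun]
  refine exists_congr fun k ↦ ?_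
  simp [PiLp.ext_iff, hcol, mul_comm, eq_comm]

lemma nonempty (hT : IsLatticeOf Λ T) : Λ.Nonempty := by
  obtain ⟨b, rfl⟩ := hT.exists_basis
  exact Submodule.nonempty _

lemma bddAbove_range_infDist (hT : IsLatticeOf Λ T) :
    BddAbove (Set.range fun x ↦ infDist x Λ) := by
  obtain ⟨b, rfl⟩ := hT.exists_basis
  exact ⟨∑ i, ‖b i‖, Set.forall_mem_range.2 (infDist_span_int_le b)⟩

end IsLatticeOf

end Lattice

theorem stmt3_general {d : ℕ} (Λ : Set (Euc d)) (hne : Λ.Nonempty)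
    (hbdd : BddAbove (Set.range fun x ↦ Metric.infDist x Λ)) (hcov : covRad Λ < 1 / 2) :
    covRadCube (Λ ∩ halfOpenCube d) ≤ (1 + Real.sqrt d) * covRad Λ := by
  refine covRadCube_le fun x hx ↦ ?_
  simpa using infDist_inter_le_of_convex convex_unitCube ball_cubeCenter_subset_unitCube
    unitCube_subset_closedBall_cubeCenter interior_unitCube_subset_halfOpenCube hne
    (infDist_le_covRad hbdd) hcov hx

theorem stmt3 {d : ℕ} (Λ : Set (Euc d)) (T : Matrix (Fin d) (Fin d) ℝ)
    (hT : IsLatticeOf Λ T) (hcov : covRad Λ < 1 / 2) :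
    covRadCube (Λ ∩ halfOpenCube d) ≤ (1 + Real.sqrt d) * covRad Λ :=
  stmt3_general Λ hT.nonempty hT.bddAbove_range_infDist hcov

end
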